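/- Let ρ : ℝ³ → ℝ be continuously differentiable and vanish outside the ball B(0,R). Define the Newtonian potential u(x,y,z) = ∭ ρ(a,b,c) / √((x−a)² + (y−b)² + (z−c)²) da db dc. Then u is twice continuously differentiable on B(0,R) and satisfies the Poisson equation Δu(x,y,z) = −4π ρ(x,y,z) for all (x,y,z) ∈ B(0,R), and Δu = 0 outside B(0,R). -/

import Mathlib

/-!
The potential is the convolution `u p = ∫ ‖t‖⁻¹ ρ (p - t) dt` of a `C¹` compactly supported density
with a locally integrable kernel, so it is `C¹` and `∂_v u p = ∫ ‖t‖⁻¹ ∂_v ρ (p - t) dt`.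
Integrating by parts, `∂_v u p = ∫ K_v(t) ρ (p - t) dt` with `K_v = ∂_v (1/‖t‖)`
(`norm_inv_conv_fderiv`); the singularity at the origin is handled by replacing `1/‖t‖` with
`(‖t‖² + ε²)^(-1/2)` and letting `ε → 0` by dominated convergence (`integral_norm_inv_mul_fderiv`).
The kernel `K_v` is `O(‖t‖⁻²)`, hence still locally integrable in dimension three. Differentiating
the convolution once more, with the derivative again on `ρ`, shows that `u` is `C²` on the whole
space and that `Δu p = -∫ ‖t‖⁻³ Dρ (p - t) t dt`.

In polar coordinates `t = r ω` this integral is `∫_{S²} ∫_0^∞ (d/dr) ρ (p - r ω) dr dω`. By the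
fundamental theorem of calculus each ray contributes `-ρ p`, and the unit sphere has area `4π`
(`sum_gradKer_conv`). The identity `Δu = -4πρ` therefore holds everywhere, and outside the ball its
right-hand side vanishes.
-/

open MeasureTheory

open Set Filter Topology Metric
open scoped Convolution RealInnerProductSpace

local notation "E3" => EuclideanSpace ℝ (Fin 3)

/-! ### The kernel and its gradient -/

/-- The directional derivative `∂_v (1/‖t‖) = -⟪t, v⟫ / ‖t‖³` of the Newtonian kernel; it takes the
value `0` at the singular point `t = 0`. -/
noncomputable def gradKer (v t : E3) : ℝ := -⟪t, v⟫ * (‖t‖ ^ 3)⁻¹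

/-- In dimension three the Jacobian `y²` absorbs the singularity `y⁻ᵏ` for `k ≤ 2`. -/
lemma locallyIntegrable_norm_inv_pow {k : ℕ} (hk : k ≤ 2) :
    LocallyIntegrable (fun t : E3 => (‖t‖ ^ k)⁻¹) := by
  have h : ∀ r : ℝ, IntegrableOn (fun t : E3 => (‖t‖ ^ k)⁻¹) (ball 0 r) := by
    intro r
    rw [integrableOn_fun_norm_addHaar volume (f := fun y : ℝ => (y ^ k)⁻¹)]
    have h1 : IntegrableOn (fun y : ℝ => y ^ (2 - k)) (Ioo 0 r) :=
      (((continuous_pow (2 - k)).continuousOn.integrableOn_Icc)).mono_set Ioo_subset_Icc_self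
    refine h1.congr_fun (fun y hy => ?_) measurableSet_Ioo
    have hy0 : y ≠ 0 := hy.1.ne'
    simp only [finrank_euclideanSpace, Fintype.card_fin, smul_eq_mul]
    rw [← pow_sub₀ y hy0 hk]
  intro x
  exact ⟨ball 0 (‖x‖ + 1), isOpen_ball.mem_nhds (by simp), h _⟩

lemma abs_gradKer_le (v t : E3) : |gradKer v t| ≤ ‖v‖ * (‖t‖ ^ 2)⁻¹ := by
  unfold gradKer
  rcases eq_or_ne t 0 with rfl | ht
  · simp
  have ht' : 0 < ‖t‖ := norm_pos_iff.2 ht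
  rw [abs_mul, abs_neg, abs_of_nonneg (by positivity : 0 ≤ (‖t‖ ^ 3)⁻¹)]
  calc |⟪t, v⟫| * (‖t‖ ^ 3)⁻¹ ≤ (‖t‖ * ‖v‖) * (‖t‖ ^ 3)⁻¹ := by
        gcongr; exact abs_real_inner_le_norm t v
    _ = ‖v‖ * (‖t‖ ^ 2)⁻¹ := by field_simp

lemma measurable_gradKer (v : E3) : Measurable (gradKer v) := by
  unfold gradKer
  fun_prop

lemma locallyIntegrable_gradKer (v : E3) : LocallyIntegrable (gradKer v) := by
  have h := (locallyIntegrable_norm_inv_pow le_rfl).smul (‖v‖)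
  refine h.mono (measurable_gradKer v).aestronglyMeasurable (.of_forall fun t => ?_)
  simpa [abs_mul] using abs_gradKer_le v t

lemma locallyIntegrable_norm_inv : LocallyIntegrable (fun t : E3 => ‖t‖⁻¹) := by
  simpa using locallyIntegrable_norm_inv_pow (k := 1) one_le_two

/-! ### Distributional derivative of the kernel -/

/-- The derivative of the kernel `(‖t‖² + ε²)^(-1/2)`, a smooth regularization of `1/‖t‖`. -/
lemma hasFDerivAt_regularized {ε : ℝ} (hε : ε ≠ 0) (t : E3) :
    HasFDerivAt (fun t : E3 => (√(‖t‖ ^ 2 + ε ^ 2))⁻¹)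
      ((-(√(‖t‖ ^ 2 + ε ^ 2) ^ 3)⁻¹) • innerSL ℝ t) t := by
  have hpos : 0 < ‖t‖ ^ 2 + ε ^ 2 := by positivity
  have h1 : HasFDerivAt (fun t : E3 => ‖t‖ ^ 2 + ε ^ 2) (2 • innerSL ℝ t) t :=
    (hasStrictFDerivAt_norm_sq t).hasFDerivAt.add_const _
  have h2 := (hasDerivAt_inv (Real.sqrt_pos.2 hpos).ne').comp_hasFDerivAt t (h1.sqrt hpos.ne')
  refine h2.congr_fderiv ?_
  ext v
  have : √(‖t‖ ^ 2 + ε ^ 2) ≠ 0 := (Real.sqrt_pos.2 hpos).ne'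
  simp
  field_simp

lemma inv_sqrt_le {ε : ℝ} {t : E3} (ht : t ≠ 0) : (√(‖t‖ ^ 2 + ε ^ 2))⁻¹ ≤ ‖t‖⁻¹ := by
  have ht' : 0 < ‖t‖ := norm_pos_iff.2 ht
  gcongr
  exact Real.le_sqrt_of_sq_le (by nlinarith [sq_nonneg ε])

lemma tendsto_inv_sqrt {t : E3} (ht : t ≠ 0) :
    Tendsto (fun ε : ℝ => (√(‖t‖ ^ 2 + ε ^ 2))⁻¹) (𝓝[≠] 0) (𝓝 ‖t‖⁻¹) := by
  have ht' : 0 < ‖t‖ := norm_pos_iff.2 ht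
  have hc : ContinuousAt (fun ε : ℝ => (√(‖t‖ ^ 2 + ε ^ 2))⁻¹) 0 := by
    refine ContinuousAt.inv₀ (by fun_prop) ?_
    simp [ht]
  have := hc.tendsto
  simp only [ne_eq, OfNat.ofNat_ne_zero, not_false_eq_true, zero_pow, add_zero,
    Real.sqrt_sq ht'.le] at this
  exact this.mono_left nhdsWithin_le_nhds

/-- `gradKer v` is the distributional derivative of `1/‖t‖` in the direction `v`. -/
lemma integral_norm_inv_mul_fderiv {φ : E3 → ℝ} (hφ : ContDiff ℝ 1 φ) (hc : HasCompactSupport φ)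
    (v : E3) :
    ∫ t, ‖t‖⁻¹ * fderiv ℝ φ t v = -∫ t, gradKer v t * φ t := by
  have hne : ∀ᵐ t : E3, t ≠ 0 := Measure.ae_ne volume 0
  have hψ : Continuous fun t => fderiv ℝ φ t v :=
    (hφ.continuous_fderiv one_ne_zero).clm_apply continuous_const
  have hψc : HasCompactSupport fun t => fderiv ℝ φ t v := hc.fderiv_apply ℝ v
  -- integration by parts for the regularized kernel
  have key : ∀ ε : ℝ, ε ≠ 0 → ∫ t : E3, (√(‖t‖ ^ 2 + ε ^ 2))⁻¹ * fderiv ℝ φ t v =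
      -∫ t : E3, (-⟪t, v⟫ * (√(‖t‖ ^ 2 + ε ^ 2))⁻¹ ^ 3) * φ t := by
    intro ε hε
    have hpos : ∀ t : E3, √(‖t‖ ^ 2 + ε ^ 2) ≠ 0 := fun t =>
      (Real.sqrt_pos.2 (by positivity)).ne'
    have hcN : Continuous fun t : E3 => (√(‖t‖ ^ 2 + ε ^ 2))⁻¹ :=
      Continuous.inv₀ (by fun_prop) hpos
    have hd : ∀ t : E3, fderiv ℝ (fun t : E3 => (√(‖t‖ ^ 2 + ε ^ 2))⁻¹) t v =
        -⟪t, v⟫ * (√(‖t‖ ^ 2 + ε ^ 2))⁻¹ ^ 3 := by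
      intro t
      rw [(hasFDerivAt_regularized hε t).fderiv]
      simp
      ring
    have hcd : Continuous fun t : E3 => -⟪t, v⟫ * (√(‖t‖ ^ 2 + ε ^ 2))⁻¹ ^ 3 := by fun_prop
    have := integral_mul_fderiv_eq_neg_fderiv_mul_of_integrable (μ := (volume : Measure E3))
      (f := fun t : E3 => (√(‖t‖ ^ 2 + ε ^ 2))⁻¹) (g := φ) (v := v) ?_ ?_ ?_
      (fun t _ => (hasFDerivAt_regularized hε t).differentiableAt)
      (fun t _ => hφ.differentiable one_ne_zero t)
    · simpa only [hd] using this
    · simp only [hd]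
      exact (hcd.mul hφ.continuous).integrable_of_hasCompactSupport hc.mul_left
    · exact (hcN.mul hψ).integrable_of_hasCompactSupport hψc.mul_left
    · exact (hcN.mul hφ.continuous).integrable_of_hasCompactSupport hc.mul_left
  have lim1 : Tendsto (fun ε : ℝ => ∫ t : E3, (√(‖t‖ ^ 2 + ε ^ 2))⁻¹ * fderiv ℝ φ t v)
      (𝓝[≠] 0) (𝓝 (∫ t, ‖t‖⁻¹ * fderiv ℝ φ t v)) := by
    refine tendsto_integral_filter_of_dominated_convergence
      (fun t => ‖‖t‖⁻¹ * fderiv ℝ φ t v‖) ?_ ?_ ?_ ?_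
    · exact .of_forall fun ε => (Measurable.mul (by fun_prop) hψ.measurable).aestronglyMeasurable
    · refine .of_forall fun ε => hne.mono fun t ht => ?_
      simp only [norm_mul, norm_inv, norm_norm]
      rw [Real.norm_of_nonneg (Real.sqrt_nonneg _)]
      gcongr ?_ * _
      exact inv_sqrt_le ht
    · exact (locallyIntegrable_norm_inv.integrable_smul_right_of_hasCompactSupport hψ hψc).norm
    · exact hne.mono fun t ht => (tendsto_inv_sqrt ht).mul_const _
  have lim2 : Tendsto
      (fun ε : ℝ => ∫ t : E3, (-⟪t, v⟫ * (√(‖t‖ ^ 2 + ε ^ 2))⁻¹ ^ 3) * φ t)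
      (𝓝[≠] 0) (𝓝 (∫ t, gradKer v t * φ t)) := by
    refine tendsto_integral_filter_of_dominated_convergence
      (fun t => ‖gradKer v t * φ t‖) ?_ ?_ ?_ ?_
    · exact .of_forall fun ε =>
        (Measurable.mul (by fun_prop) hφ.continuous.measurable).aestronglyMeasurable
    · refine .of_forall fun ε => hne.mono fun t ht => ?_
      simp only [gradKer, norm_mul, norm_inv, norm_pow, norm_norm, ← inv_pow]
      rw [Real.norm_of_nonneg (Real.sqrt_nonneg _)]
      gcongr
      exact Real.le_sqrt_of_sq_le (by nlinarith [sq_nonneg ε])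
    · exact ((locallyIntegrable_gradKer v).integrable_smul_right_of_hasCompactSupport
        hφ.continuous hc).norm
    · refine hne.mono fun t ht => ?_
      simp only [gradKer, ← inv_pow]
      exact (((tendsto_inv_sqrt ht).pow 3).const_mul _).mul_const _
  refine tendsto_nhds_unique lim1 (lim2.neg.congr' ?_)
  filter_upwards [self_mem_nhdsWithin] with ε hε
  exact (key ε hε).symm

/-- Integration by parts moves the derivative from the density onto the kernel. -/
lemma norm_inv_conv_fderiv {ρ : E3 → ℝ} (hρ : ContDiff ℝ 1 ρ) (hc : HasCompactSupport ρ)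
    (v p : E3) :
    ∫ t, ‖t‖⁻¹ * fderiv ℝ ρ (p - t) v = ∫ t, gradKer v t * ρ (p - t) := by
  have hd : ∀ t, fderiv ℝ (fun t => ρ (p - t)) t v = -fderiv ℝ ρ (p - t) v := by
    intro t
    have h1 : HasFDerivAt (fun t : E3 => p - t) (-ContinuousLinearMap.id ℝ E3) t :=
      (hasFDerivAt_id t).const_sub p
    have h2 := ((hρ.differentiable one_ne_zero (p - t)).hasFDerivAt).comp t h1
    rw [show (fun t => ρ (p - t)) = ρ ∘ fun t => p - t from rfl, h2.fderiv]
    simp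
  have h := integral_norm_inv_mul_fderiv (φ := fun t => ρ (p - t))
    (hρ.comp (contDiff_const.sub contDiff_id))
    (hc.comp_homeomorph (Homeomorph.subLeft p)) v
  simp only [hd, mul_neg, integral_neg, neg_inj] at h
  exact h

/-! ### Convolution with a locally integrable kernel -/

/-- Convolution of a locally integrable kernel with a `C¹` compactly supported density is
differentiable, and the derivative may be placed on the density. -/
lemma hasFDerivAt_kernel_conv {k ρ : E3 → ℝ} (hk : LocallyIntegrable k) (hρ : ContDiff ℝ 1 ρ)
    (hc : HasCompactSupport ρ) (p v : E3) :
    DifferentiableAt ℝ (fun p => ∫ t, k t * ρ (p - t)) p ∧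
    fderiv ℝ (fun p => ∫ t, k t * ρ (p - t)) p v = ∫ t, k t * fderiv ℝ ρ (p - t) v := by
  have h := hc.hasFDerivAt_convolution_right (ContinuousLinearMap.mul ℝ ℝ) hk hρ p
  have h' : HasFDerivAt (fun p => ∫ t, k t * ρ (p - t)) _ p := h
  refine ⟨h'.differentiableAt, ?_⟩
  rw [h'.fderiv, convolution_precompR_apply (ContinuousLinearMap.mul ℝ ℝ) hk (hc.fderiv ℝ)
    (hρ.continuous_fderiv one_ne_zero)]
  rfl

lemma contDiff_kernel_conv {k ρ : E3 → ℝ} (hk : LocallyIntegrable k) (hρ : ContDiff ℝ 1 ρ)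
    (hc : HasCompactSupport ρ) : ContDiff ℝ 1 (fun p => ∫ t, k t * ρ (p - t)) :=
  hc.contDiff_convolution_right (n := 1) (ContinuousLinearMap.mul ℝ ℝ) hk hρ

/-! ### Polar coordinates and the Laplacian -/

/-- Integration in polar coordinates for a (possibly non-radial) function on `ℝ³`. -/
lemma integral_polar {f : E3 → ℝ} (hf : Integrable f) :
    ∫ t, f t = ∫ ω : sphere (0 : E3) 1, (∫ r in Ioi (0 : ℝ), r ^ 2 * f (r • (ω : E3)))
      ∂(volume : Measure E3).toSphere := by
  have mp := (volume : Measure E3).measurePreserving_homeomorphUnitSphereProd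
  have emb := (homeomorphUnitSphereProd E3).measurableEmbedding
  set F : sphere (0 : E3) 1 × Ioi (0 : ℝ) → ℝ := fun x => f ((x.2 : ℝ) • (x.1 : E3)) with hF
  have hFc : ∀ t : ({0}ᶜ : Set E3), F (homeomorphUnitSphereProd E3 t) = f t := by
    rintro ⟨t, ht⟩
    have : ‖t‖ ≠ 0 := by simpa using ht
    simp [hF, smul_smul, this]
  have hInt : Integrable F ((volume : Measure E3).toSphere.prod (.volumeIoiPow 2)) := by
    have h1 := mp.integrable_comp_emb emb (g := F)
    simp only [finrank_euclideanSpace, Fintype.card_fin] at h1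
    rw [← h1, show F ∘ homeomorphUnitSphereProd E3 = f ∘ Subtype.val from funext hFc,
      ← integrableOn_iff_comap_subtypeVal (measurableSet_singleton _).compl]
    exact hf.integrableOn
  calc
    ∫ t, f t = ∫ t : ({(0)}ᶜ : Set E3), f t ∂((volume : Measure E3).comap Subtype.val) := by
      rw [integral_subtype_comap (measurableSet_singleton _).compl fun x ↦ f x,
        MeasureTheory.restrict_compl_singleton]
    _ = ∫ x, F x ∂((volume : Measure E3).toSphere.prod (.volumeIoiPow 2)) := by
      have := mp.integral_comp emb F
      simp only [finrank_euclideanSpace, Fintype.card_fin] at this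
      rw [← this]
      exact integral_congr_ae (.of_forall fun t => (hFc t).symm)
    _ = _ := by
      rw [integral_prod _ hInt]
      refine integral_congr_ae (.of_forall fun ω => ?_)
      simp only [Measure.volumeIoiPow, ENNReal.ofReal]
      rw [integral_withDensity_eq_integral_smul,
        integral_subtype_comap measurableSet_Ioi
          fun a ↦ Real.toNNReal (a ^ 2) • f (a • (ω : E3)),
        setIntegral_congr_fun measurableSet_Ioi fun x hx ↦ ?_]
      · rw [NNReal.smul_def, Real.coe_toNNReal _ (by positivity), smul_eq_mul]
      · exact (measurable_subtype_coe.pow_const _).real_toNNReal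

lemma toSphere_univ : (volume : Measure E3).toSphere.real univ = 4 * Real.pi := by
  rw [Measure.toSphere_real_apply_univ, measureReal_def, EuclideanSpace.volume_ball_fin_three]
  have : 0 ≤ Real.pi * 4 / 3 := by positivity
  simp [ENNReal.toReal_ofReal this]
  ring

/-- The fundamental theorem of calculus along the rays issuing from `p`. -/
lemma integral_ray {ρ : E3 → ℝ} (hρ : ContDiff ℝ 1 ρ) (hc : HasCompactSupport ρ) (p : E3)
    {ω : E3} (hω : ‖ω‖ = 1) :
    ∫ r in Ioi (0 : ℝ), -fderiv ℝ ρ (p - r • ω) ω = -ρ p := by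
  have hd : ∀ r : ℝ, HasDerivAt (fun r : ℝ => ρ (p - r • ω)) (-fderiv ℝ ρ (p - r • ω) ω) r := by
    intro r
    have h1 : HasDerivAt (fun r : ℝ => p - r • ω) (-ω) r := by
      simpa using ((hasDerivAt_id r).smul_const ω).const_sub p
    have := (hρ.differentiable one_ne_zero (p - r • ω)).hasFDerivAt.comp_hasDerivAt r h1
    rw [map_neg] at this
    exact this
  have hcs : HasCompactSupport (fun r : ℝ => ρ (p - r • ω)) := by
    refine hc.comp_isClosedEmbedding (g := fun r : ℝ => p - r • ω) ?_
    refine Isometry.isClosedEmbedding (Isometry.of_dist_eq fun a b => ?_)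
    rw [dist_sub_left, dist_eq_norm, ← sub_smul, norm_smul, hω, mul_one, dist_eq_norm]
  have h := hcs.integral_Ioi_deriv_eq (by fun_prop) 0
  simpa [funext fun r => (hd r).deriv] using h

/-- In polar coordinates the Jacobian `r²` cancels the kernel, since `r² ∇(1/‖t‖) = -ω` at
`t = r ω`. What remains is the integral of a radial derivative along each ray, so every direction
`ω` contributes `-ρ p`. -/
lemma sum_gradKer_conv {ρ : E3 → ℝ} (hρ : ContDiff ℝ 1 ρ) (hc : HasCompactSupport ρ) (p : E3) :
    ∑ i : Fin 3, ∫ t, gradKer (EuclideanSpace.single i 1) t *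
      fderiv ℝ ρ (p - t) (EuclideanSpace.single i 1) = -(4 * Real.pi) * ρ p := by
  have hInt : ∀ v : E3, Integrable fun t => gradKer v t * fderiv ℝ ρ (p - t) v := by
    intro v
    refine (locallyIntegrable_gradKer v).integrable_smul_right_of_hasCompactSupport
      (g := fun t => fderiv ℝ ρ (p - t) v) ?_ ?_
    · exact ((hρ.continuous_fderiv one_ne_zero).comp (by fun_prop)).clm_apply continuous_const
    · exact (hc.fderiv_apply ℝ v).comp_homeomorph (Homeomorph.subLeft p)
  rw [← integral_finsetSum _ fun i _ => hInt _,
    integral_polar (integrable_finsetSum _ fun i _ => hInt _)]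
  have hray : ∀ ω : sphere (0 : E3) 1, ∫ r in Ioi (0 : ℝ), r ^ 2 *
      ∑ i : Fin 3, gradKer (EuclideanSpace.single i 1) (r • (ω : E3)) *
        fderiv ℝ ρ (p - r • (ω : E3)) (EuclideanSpace.single i 1) = -ρ p := by
    intro ω
    have hω : ‖(ω : E3)‖ = 1 := by simp
    rw [← integral_ray hρ hc p hω]
    refine setIntegral_congr_fun measurableSet_Ioi fun r hr => ?_
    have hr : 0 < r := hr
    have hsum : fderiv ℝ ρ (p - r • (ω : E3)) ω = ∑ i : Fin 3,
        (ω : E3) i * fderiv ℝ ρ (p - r • (ω : E3)) (EuclideanSpace.single i 1) := by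
      have h := congrArg (fderiv ℝ ρ (p - r • (ω : E3)))
        ((EuclideanSpace.basisFun (Fin 3) ℝ).sum_repr (ω : E3))
      rw [map_sum] at h
      simpa using h.symm
    simp only [hsum, Finset.mul_sum, ← Finset.sum_neg_distrib]
    refine Finset.sum_congr rfl fun i _ => ?_
    simp only [gradKer, norm_smul, hω, mul_one, Real.norm_of_nonneg hr.le, inner_smul_left,
      EuclideanSpace.inner_single_right]
    simp
    field_simp
  simp only [hray, integral_const, toSphere_univ, smul_eq_mul]
  ring

/-- The Newtonian volume potential of a `C¹` density supported in `B(0,R)`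
solves the Poisson equation `Δu = -4πρ` inside the ball and the Laplace
equation outside. -/
theorem newtonian_potential_poisson (R : ℝ) (hR : 0 < R)
    (ρ : EuclideanSpace ℝ (Fin 3) → ℝ) (hρ : ContDiff ℝ 1 ρ)
    (hsupp : ∀ p : EuclideanSpace ℝ (Fin 3), R ≤ ‖p‖ → ρ p = 0)
    (u : EuclideanSpace ℝ (Fin 3) → ℝ)
    (hu : ∀ p : EuclideanSpace ℝ (Fin 3), u p = ∫ q, ρ q / dist p q) :
    ContDiffOn ℝ 2 u (Metric.ball 0 R) ∧
    (∀ p ∈ Metric.ball (0 : EuclideanSpace ℝ (Fin 3)) R,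
      (∑ i : Fin 3, fderiv ℝ (fun q => fderiv ℝ u q (EuclideanSpace.single i 1)) p
        (EuclideanSpace.single i 1)) = -(4 * Real.pi) * ρ p) ∧
    (∀ p : EuclideanSpace ℝ (Fin 3), R < ‖p‖ →
      (∑ i : Fin 3, fderiv ℝ (fun q => fderiv ℝ u q (EuclideanSpace.single i 1)) p
        (EuclideanSpace.single i 1)) = 0) := by
  have hc : HasCompactSupport ρ := by
    refine HasCompactSupport.intro (isCompact_closedBall 0 R) fun x hx => hsupp x ?_
    simp only [mem_closedBall, dist_zero_right, not_le] at hx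
    exact hx.le
  have hu' : u = fun p => ∫ t, ‖t‖⁻¹ * ρ (p - t) := by
    ext p
    rw [hu, ← integral_sub_left_eq_self _ volume p]
    simp [div_eq_inv_mul]
  have hN := locallyIntegrable_norm_inv
  -- The first derivatives of `u` are again convolutions of `ρ` with locally integrable kernels.
  have hdu : ∀ v : E3, (fun q => fderiv ℝ u q v) = fun q => ∫ t, gradKer v t * ρ (q - t) := by
    intro v
    ext q
    rw [hu', (hasFDerivAt_kernel_conv hN hρ hc q v).2, norm_inv_conv_fderiv hρ hc]
  have hC2 : ContDiff ℝ 2 u := by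
    rw [show (2 : WithTop ℕ∞) = 1 + 1 by norm_num, contDiff_succ_iff_fderiv_apply]
    refine ⟨fun q => ?_, by simp, fun v => ?_⟩
    · rw [hu']
      exact (hasFDerivAt_kernel_conv hN hρ hc q 0).1
    · rw [hdu]
      exact contDiff_kernel_conv (locallyIntegrable_gradKer v) hρ hc
  have hΔ : ∀ p : E3, (∑ i : Fin 3,
      fderiv ℝ (fun q => fderiv ℝ u q (EuclideanSpace.single i 1)) p
        (EuclideanSpace.single i 1)) = -(4 * Real.pi) * ρ p := by
    intro p
    rw [← sum_gradKer_conv hρ hc p]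
    refine Finset.sum_congr rfl fun i _ => ?_
    rw [hdu]
    exact (hasFDerivAt_kernel_conv (locallyIntegrable_gradKer _) hρ hc p _).2
  refine ⟨hC2.contDiffOn, fun p _ => hΔ p, fun p hp => ?_⟩
  rw [hΔ, hsupp p hp.le, mul_zero]
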